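/- Let M ≥ 6 be an even integer and let a, b be integers with 1 ≤ a < b < M/2 and gcd(a,M) = gcd(b,M) = 1. Then for every integer n ≥ 0 and every integer m with 1 ≤ m ≤ Mn + M/2, the number of partitions of Mn + M/2 into exactly m parts, each part congruent to a or M−a modulo M, is greater than or equal to the number of partitions of Mn + M/2 into exactly m parts, each part congruent to b or M−b modulo M. (This is part (ii) of the main theorem, equivalently Corollary 1(ii).) -/

import Mathlib

/-!
Write `D ≥ 0` for the difference between the numbers of parts congruent to `±a`, and let `P_r` be
the generating function of the multisets of `r` natural numbers, so that
`P_r * ∏_{1 ≤ i ≤ r} (1 - X ^ i) = 1`. Partitions with `s + D` parts `≡ a` and `s` parts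
`≡ -a`, or the other way round, have generating function
`X ^ (s M) (X ^ (D a) + X ^ (D (M - a))) (P_{s+D} P_s)(X ^ M)`. Subtracting the same expression for
`b` leaves the factor `(1 - X ^ (D (b - a))) (1 - X ^ (D (M - a - b)))`. The `b` terms contribute
to an exponent `n` with `M ∣ 2 n` only if `M ∣ 2 D`, and then this factor is
`(1 - Y ^ j) (1 - Y ^ L)` with `Y = X ^ M` and `2 ≤ L ≤ D` (or `D = 0`). As `1 - Y` divides
`1 - Y ^ j`, both factors are absorbed by `P_{s+D}(Y)`, and what remains has nonnegative
coefficients.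
-/

open Finset PowerSeries

section NonnegCoeff

variable (R : Type*) [CommRing R] [PartialOrder R] [IsOrderedRing R]

/-- The power series with nonnegative coefficients, as a subsemiring so that closure under sums and
products is available. -/
def nonnegCoeff : Subsemiring R⟦X⟧ where
  carrier := {f | ∀ n, 0 ≤ coeff n f}
  zero_mem' n := by simp
  one_mem' n := by rw [coeff_one]; split_ifs <;> simp
  add_mem' hf hg n := by simpa using add_nonneg (hf n) (hg n)
  mul_mem' hf hg n := by
    rw [coeff_mul]
    exact sum_nonneg fun k _ => mul_nonneg (hf k.1) (hg k.2)

variable {R}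

lemma mem_nonnegCoeff {f : R⟦X⟧} : f ∈ nonnegCoeff R ↔ ∀ n, 0 ≤ coeff n f := Iff.rfl

lemma X_pow_mem_nonnegCoeff (k : ℕ) : (X ^ k : R⟦X⟧) ∈ nonnegCoeff R := fun n => by
  rw [coeff_X_pow]; split_ifs <;> simp

lemma expand_mem_nonnegCoeff {M : ℕ} (hM : M ≠ 0) {f : R⟦X⟧} (hf : f ∈ nonnegCoeff R) :
    expand M hM f ∈ nonnegCoeff R := fun n => by
  rw [coeff_expand]; split_ifs <;> simp [hf _]

lemma exists_mem_nonnegCoeff_mul_one_sub_X_pow {k : ℕ} (hk : k ≠ 0) :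
    ∃ g ∈ nonnegCoeff R, g * (1 - X ^ k) = 1 := by
  refine ⟨expand k hk (mk 1), expand_mem_nonnegCoeff hk fun n => by simp, ?_⟩
  simpa using congrArg (expand k hk) (mk_one_mul_one_sub_eq_one R)

lemma mem_nonnegCoeff_of_mul_prod_one_sub_X_pow {s : Finset ℕ} (hs : 0 ∉ s) {f : R⟦X⟧}
    (hf : f * ∏ i ∈ s, (1 - X ^ i) ∈ nonnegCoeff R) : f ∈ nonnegCoeff R := by
  induction s using Finset.induction_on generalizing f with
  | empty => simpa using hf
  | insert k s hks ih =>
    rw [mem_insert, not_or] at hs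
    obtain ⟨g, hg, hgk⟩ := exists_mem_nonnegCoeff_mul_one_sub_X_pow (R := R) (Ne.symm hs.1)
    apply ih hs.2
    convert mul_mem hg hf using 1
    rw [prod_insert hks]
    linear_combination -f * (∏ i ∈ s, (1 - X ^ i)) * hgk

end NonnegCoeff

section MultisetSeries

variable {S T : Set ℕ}

/-- The multisets of `m` elements of `S` with sum `n`, cut out of the finite set of all multisets of
`m` natural numbers with sum `n`. -/
noncomputable def multisetsIn (S : Set ℕ) (m n : ℕ) : Finset (Multiset ℕ) :=
  open Classical in
  {A ∈ (Finset.Nat.antidiagonalTuple m n).image fun f => univ.val.map f | ∀ x ∈ A, x ∈ S}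

lemma mem_multisetsIn {m n : ℕ} {A : Multiset ℕ} :
    A ∈ multisetsIn S m n ↔ A.card = m ∧ A.sum = n ∧ ∀ x ∈ A, x ∈ S := by
  simp only [multisetsIn, mem_filter, mem_image, Finset.Nat.mem_antidiagonalTuple, ← and_assoc]
  refine and_congr_left fun _ => ⟨?_, ?_⟩
  · rintro ⟨f, hf, rfl⟩
    exact ⟨by simp, hf⟩
  · rintro ⟨rfl, rfl⟩
    rw [← A.coe_toList, Multiset.coe_card]
    exact ⟨A.toList.get, by rw [← List.sum_ofFn, List.ofFn_get, Multiset.sum_coe],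
      by rw [Fin.univ_val_map, List.ofFn_get]⟩

/-- The generating function, by sum, of the multisets of `m` elements of `S`. -/
noncomputable def multisetSeries (S : Set ℕ) (m : ℕ) : ℤ⟦X⟧ :=
  mk fun n => (#(multisetsIn S m n) : ℤ)

lemma coeff_multisetSeries (S : Set ℕ) (m n : ℕ) :
    coeff n (multisetSeries S m) = #(multisetsIn S m n) := coeff_mk _ _

lemma multisetSeries_mem_nonnegCoeff (S : Set ℕ) (m : ℕ) :
    multisetSeries S m ∈ nonnegCoeff ℤ := fun n => by
  simp [coeff_multisetSeries]

lemma multisetSeries_eq_X_pow_sum {m : ℕ} {B : Multiset ℕ}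
    (hB : ∀ A : Multiset ℕ, A.card = m ∧ (∀ x ∈ A, x ∈ S) ↔ A = B) :
    multisetSeries S m = X ^ B.sum := by
  ext n
  have hn : multisetsIn S m n = if n = B.sum then {B} else ∅ := by
    ext A
    rw [mem_multisetsIn, and_left_comm, hB]
    grind
  rw [coeff_multisetSeries, hn, coeff_X_pow]
  split_ifs <;> simp

lemma multisetSeries_zero (S : Set ℕ) : multisetSeries S 0 = 1 := by
  refine (multisetSeries_eq_X_pow_sum fun A => ?_).trans (by simp : X ^ (0 : Multiset ℕ).sum = 1)
  rw [Multiset.card_eq_zero, and_iff_left_of_imp]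
  rintro rfl
  simp

lemma multisetSeries_singleton (c m : ℕ) : multisetSeries {c} m = X ^ (m * c) := by
  have h := multisetSeries_eq_X_pow_sum (S := {c}) fun _ => (Multiset.eq_replicate (n := m)).symm
  simpa using h

lemma card_multisetsIn_union (h : Disjoint S T) (m n : ℕ) :
    #(multisetsIn (S ∪ T) m n) = ∑ q ∈ antidiagonal m, ∑ k ∈ antidiagonal n,
      #(multisetsIn S q.1 k.1) * #(multisetsIn T q.2 k.2) := by
  classical
  simp_rw [← sum_product', ← card_product, ← card_sigma]
  symm
  refine card_nbij' (fun P => P.2.1 + P.2.2)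
    (fun A => ⟨(((A.filter (· ∈ S)).card, (A.filter (· ∉ S)).card),
      ((A.filter (· ∈ S)).sum, (A.filter (· ∉ S)).sum)), (A.filter (· ∈ S), A.filter (· ∉ S))⟩)
    ?_ ?_ ?_ ?_
  · rintro ⟨⟨⟨r, s⟩, i, j⟩, A, B⟩ hP
    simp only [coe_sigma, Set.mem_sigma_iff, mem_coe, mem_product,
      HasAntidiagonal.mem_antidiagonal, mem_multisetsIn] at hP ⊢
    obtain ⟨⟨rfl, rfl⟩, ⟨rfl, rfl, hA⟩, rfl, rfl, hB⟩ := hP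
    exact ⟨Multiset.card_add A B, Multiset.sum_add A B, fun x hx =>
      (Multiset.mem_add.1 hx).imp (hA x) (hB x)⟩
  · intro A hA
    simp only [coe_sigma, Set.mem_sigma_iff, mem_coe, mem_product,
      HasAntidiagonal.mem_antidiagonal, mem_multisetsIn, ← Multiset.card_add, ← Multiset.sum_add,
      Multiset.filter_add_not] at hA ⊢
    obtain ⟨hm, hn, hA⟩ := hA
    exact ⟨⟨hm, hn⟩, ⟨trivial, trivial, fun x hx => Multiset.of_mem_filter hx⟩, trivial, trivial,
      fun x hx => (hA x (Multiset.mem_of_mem_filter hx)).resolve_left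
        (Multiset.mem_filter.1 hx).2⟩
  · rintro ⟨⟨⟨r, s⟩, i, j⟩, A, B⟩ hP
    simp only [coe_sigma, Set.mem_sigma_iff, mem_coe, mem_product, mem_multisetsIn] at hP
    obtain ⟨-, ⟨rfl, rfl, hA⟩, rfl, rfl, hB⟩ := hP
    have hB' : ∀ x ∈ B, x ∉ S := fun x hx hS => Set.disjoint_left.1 h hS (hB x hx)
    have hS : (A + B).filter (· ∈ S) = A := by
      rw [Multiset.filter_add, Multiset.filter_eq_self.2 hA, Multiset.filter_eq_nil.2 hB', add_zero]
    have hT : (A + B).filter (· ∉ S) = B := by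
      rw [Multiset.filter_add, Multiset.filter_eq_nil.2 fun x hx => not_not.2 (hA x hx),
        Multiset.filter_eq_self.2 hB', zero_add]
    simp only [hS, hT]
  · intro A _
    exact Multiset.filter_add_not _ A

lemma multisetSeries_union (h : Disjoint S T) (m : ℕ) :
    multisetSeries (S ∪ T) m =
      ∑ q ∈ antidiagonal m, multisetSeries S q.1 * multisetSeries T q.2 := by
  ext n
  simp [coeff_multisetSeries, card_multisetsIn_union h, coeff_mul]

lemma sum_map_mul_add (M c : ℕ) (A : Multiset ℕ) :
    (A.map (M * · + c)).sum = A.card * c + M * A.sum := by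
  rw [Multiset.sum_map_add, Multiset.sum_map_mul_left]
  simp [add_comm]

lemma exists_map_eq_of_forall_mem_range {α β : Type*} {f : α → β} {A : Multiset β}
    (hA : ∀ x ∈ A, x ∈ Set.range f) : ∃ B : Multiset α, B.map f = A :=
  have : CanLift β α f (· ∈ Set.range f) := ⟨fun _ h => h⟩
  CanLift.prf A hA

lemma mem_multisetsIn_range_mul_add {M c m n : ℕ} {A : Multiset ℕ} :
    A ∈ multisetsIn (Set.range (M * · + c)) m n ↔
      ∃ B : Multiset ℕ, B.card = m ∧ m * c + M * B.sum = n ∧ B.map (M * · + c) = A := by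
  rw [mem_multisetsIn]
  constructor
  · rintro ⟨rfl, rfl, hA⟩
    obtain ⟨B, rfl⟩ := exists_map_eq_of_forall_mem_range hA
    exact ⟨B, by simp, by rw [sum_map_mul_add, Multiset.card_map], rfl⟩
  · rintro ⟨B, rfl, rfl, rfl⟩
    exact ⟨by simp, sum_map_mul_add M c B, by simp⟩

lemma multisetSeries_range_mul_add {M : ℕ} (hM : M ≠ 0) (c m : ℕ) :
    multisetSeries (Set.range (M * · + c)) m =
      X ^ (m * c) * expand M hM (multisetSeries .univ m) := by
  ext n
  by_cases hn : ∃ k, n = M * k + m * c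
  · obtain ⟨k, rfl⟩ := hn
    have himage : multisetsIn (Set.range (M * · + c)) m (M * k + m * c) =
        (multisetsIn .univ m k).image (Multiset.map (M * · + c)) := by
      ext A
      rw [mem_multisetsIn_range_mul_add, mem_image]
      simp [mem_multisetsIn, add_comm (M * k), hM, and_assoc]
    have hinj : Function.Injective (M * · + c) := fun x y hxy => by simpa [hM] using hxy
    rw [coeff_X_pow_mul, coeff_expand_mul, coeff_multisetSeries, coeff_multisetSeries, himage,
      card_image_of_injective _ (Multiset.map_injective hinj)]
  · have hempty : multisetsIn (Set.range (M * · + c)) m n = ∅ := by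
      refine eq_empty_of_forall_notMem fun A hA => hn ?_
      obtain ⟨B, -, hB, -⟩ := mem_multisetsIn_range_mul_add.1 hA
      exact ⟨B.sum, by rw [← hB, add_comm]⟩
    rw [coeff_multisetSeries, hempty, card_empty, Nat.cast_zero, coeff_X_pow_mul']
    split_ifs with hle
    · rw [coeff_expand_of_not_dvd]
      rintro ⟨k, hk⟩
      exact hn ⟨k, by omega⟩
    · rfl

lemma multisetSeries_univ_eq_sum (m : ℕ) :
    multisetSeries .univ m = ∑ l ∈ range (m + 1), X ^ l * multisetSeries .univ l := by
  have huniv : (.univ : Set ℕ) = {0} ∪ Set.range (1 * · + 1) := by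
    ext (_ | x) <;> simp
  have hdisj : Disjoint {0} (Set.range (1 * · + 1)) := by simp
  conv_lhs => rw [huniv, multisetSeries_union hdisj, ← Finset.Nat.sum_antidiagonal_swap]
  simp_rw [multisetSeries_range_mul_add one_ne_zero, multisetSeries_singleton]
  simp [Finset.Nat.sum_antidiagonal_eq_sum_range_succ_mk]

lemma multisetSeries_univ_mul_prod (m : ℕ) :
    multisetSeries .univ m * ∏ i ∈ Icc 1 m, (1 - X ^ i) = 1 := by
  induction m with
  | zero => simp [multisetSeries_zero]
  | succ m ih =>
    have hrec := multisetSeries_univ_eq_sum (m + 1)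
    rw [sum_range_succ, ← multisetSeries_univ_eq_sum] at hrec
    rw [prod_Icc_succ_top (by simp)]
    linear_combination ih + (∏ i ∈ Icc 1 m, (1 - X ^ i)) * hrec

lemma multisetSeries_univ_mul_prod_mem_nonnegCoeff {s : Finset ℕ} {m : ℕ} (hs : s ⊆ Icc 1 m) :
    multisetSeries .univ m * ∏ i ∈ s, (1 - X ^ i) ∈ nonnegCoeff ℤ := by
  have hzero : 0 ∉ Icc 1 m \ s := by simp
  refine mem_nonnegCoeff_of_mul_prod_one_sub_X_pow hzero ?_
  rw [mul_assoc, mul_comm (∏ i ∈ s, _), prod_sdiff hs, multisetSeries_univ_mul_prod]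
  exact one_mem _

lemma one_sub_X_pow_mul_multisetSeries_univ_mem_nonnegCoeff (j : ℕ) {L m : ℕ} (hL : 2 ≤ L)
    (hLm : L ≤ m) :
    (1 - X ^ j) * (1 - X ^ L) * multisetSeries .univ m ∈ nonnegCoeff ℤ := by
  have hs : ({1, L} : Finset ℕ) ⊆ Icc 1 m := by
    intro i; simp only [mem_insert, mem_singleton, mem_Icc]; omega
  have hgeom : ∑ i ∈ range j, X ^ i ∈ nonnegCoeff ℤ :=
    sum_mem fun i _ => X_pow_mem_nonnegCoeff i
  convert mul_mem hgeom (multisetSeries_univ_mul_prod_mem_nonnegCoeff hs) using 1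
  rw [← mul_neg_geom_sum, prod_pair (by omega)]
  ring

end MultisetSeries

section Partitions

/-- The partitions of `n` into exactly `m` parts, each congruent to `a` or `-a` modulo `M`; their
number is `p_{a,M,m}(n)`. For the residues to mean this, `0 < a < M` is required. -/
def pmPartitions (M a m n : ℕ) : Finset n.Partition :=
  {p | Multiset.card p.parts = m ∧ ∀ x ∈ p.parts, x % M = a ∨ x % M = M - a}

lemma card_filter_partition {S : Set ℕ} [DecidablePred (· ∈ S)] (hS : 0 ∉ S) (m n : ℕ) :
    #{p : n.Partition | p.parts.card = m ∧ ∀ x ∈ p.parts, x ∈ S} = #(multisetsIn S m n) := by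
  refine card_bij (fun p _ => p.parts) (fun p hp => ?_) (fun p _ q _ => Nat.Partition.ext)
    fun A hA => ?_
  · rw [mem_filter_univ] at hp
    exact mem_multisetsIn.2 ⟨hp.1, p.parts_sum, hp.2⟩
  · obtain ⟨hm, hn, hAS⟩ := mem_multisetsIn.1 hA
    have hpos : ∀ {x}, x ∈ A → 0 < x := fun hx =>
      Nat.pos_of_ne_zero fun h0 => hS (h0 ▸ hAS _ hx)
    exact ⟨⟨A, hpos, hn⟩, by simpa using ⟨hm, hAS⟩, rfl⟩

lemma mem_range_mul_add_iff_mod_eq {M c : ℕ} (hc : c < M) {x : ℕ} :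
    x ∈ Set.range (M * · + c) ↔ x % M = c := by
  constructor
  · rintro ⟨k, rfl⟩
    simp [Nat.mod_eq_of_lt hc]
  · rintro rfl
    exact ⟨x / M, Nat.div_add_mod x M⟩

/-- The generating function of the pairs of multisets with all parts `≡ a`, respectively `≡ -a`,
modulo `M`, having `r` and `s` elements. -/
noncomputable def pmSeries {M : ℕ} (hM : M ≠ 0) (a r s : ℕ) : ℤ⟦X⟧ :=
  X ^ (r * a + s * (M - a)) * expand M hM (multisetSeries .univ r * multisetSeries .univ s)

lemma card_pmPartitions {M a : ℕ} (hM : M ≠ 0) (ha : 0 < a) (haM : 2 * a < M) (m n : ℕ) :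
    (#(pmPartitions M a m n) : ℤ) =
      coeff n (∑ q ∈ antidiagonal m, pmSeries hM a q.1 q.2) := by
  classical
  set S := Set.range (M * · + a) with hSdef
  set T := Set.range (M * · + (M - a)) with hTdef
  have hS {x} : x ∈ S ↔ x % M = a := mem_range_mul_add_iff_mod_eq (by omega)
  have hT {x} : x ∈ T ↔ x % M = M - a := mem_range_mul_add_iff_mod_eq (by omega)
  have hST : Disjoint S T := Set.disjoint_left.2 fun x => by rw [hS, hT]; omega
  have hzero : 0 ∉ S ∪ T := by rw [Set.mem_union, hS, hT, Nat.zero_mod]; omega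
  have hcard : #(pmPartitions M a m n) = #(multisetsIn (S ∪ T) m n) := by
    rw [← card_filter_partition hzero, pmPartitions]
    simp only [Set.mem_union, hS, hT]
  rw [hcard, ← coeff_multisetSeries, multisetSeries_union hST]
  congr 2 with q : 1
  rw [hSdef, hTdef, multisetSeries_range_mul_add hM, multisetSeries_range_mul_add hM, pmSeries,
    map_mul]
  ring

lemma two_mul_card_pmPartitions {M a : ℕ} (hM : M ≠ 0) (ha : 0 < a) (haM : 2 * a < M) (m n : ℕ) :
    2 * (#(pmPartitions M a m n) : ℤ) =
      ∑ q ∈ antidiagonal m, coeff n (pmSeries hM a q.1 q.2 + pmSeries hM a q.2 q.1) := by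
  rw [card_pmPartitions hM ha haM, two_mul, map_sum]
  conv_lhs => rhs; rw [← Finset.Nat.sum_antidiagonal_swap]
  simp [sum_add_distrib]

end Partitions

section Comparison

variable {M a b D s n : ℕ} (hM : M ≠ 0)

lemma pmSeries_comm (ha : a ≤ M) (r s : ℕ) : pmSeries hM (M - a) r s = pmSeries hM a s r := by
  rw [pmSeries, pmSeries, Nat.sub_sub_self ha, mul_comm (multisetSeries .univ r), add_comm]

lemma pmSeries_add_left (ha : a ≤ M) (s D : ℕ) :
    pmSeries hM a (s + D) s =
      X ^ (M * s + D * a) *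
        expand M hM (multisetSeries .univ (s + D) * multisetSeries .univ s) := by
  obtain ⟨c, rfl⟩ := Nat.exists_eq_add_of_le ha
  rw [pmSeries, Nat.add_sub_cancel_left]
  ring_nf

lemma pmSeries_mem_nonnegCoeff (a r s : ℕ) : pmSeries hM a r s ∈ nonnegCoeff ℤ :=
  mul_mem (X_pow_mem_nonnegCoeff _) <| expand_mem_nonnegCoeff hM <|
    mul_mem (multisetSeries_mem_nonnegCoeff _ r) (multisetSeries_mem_nonnegCoeff _ s)

lemma coeff_pmSeries_eq_zero (ha : a ≤ M) (haM : a.Coprime M) (hn : M ∣ 2 * n)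
    (hD : ¬ M ∣ 2 * D) : coeff n (pmSeries hM a (s + D) s) = 0 := by
  rw [pmSeries_add_left hM ha, coeff_X_pow_mul']
  split_ifs with hle
  · refine coeff_expand_of_not_dvd _ _ _ fun hdvd => hD ?_
    obtain ⟨k, hk⟩ := Nat.exists_eq_add_of_le hle
    rw [hk, Nat.add_sub_cancel_left] at hdvd
    have hsum : M ∣ 2 * (M * s + k) + 2 * D * a := by
      convert hn using 1; rw [hk]; ring
    rw [Nat.dvd_add_right (((Nat.dvd_mul_right M s).add hdvd).mul_left 2)] at hsum
    exact haM.symm.dvd_of_dvd_mul_right hsum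
  · rfl

lemma dvd_mul_sub_of_dvd_two_mul (hD : M ∣ 2 * D) (haM : a.Coprime M) (hbM : b.Coprime M) :
    M ∣ D * (b - a) := by
  rcases M.even_or_odd with heven | hodd
  · have ha : Odd a := Nat.Coprime.odd_of_right (haM.coprime_dvd_right heven.two_dvd)
    have hb : Odd b := Nat.Coprime.odd_of_right (hbM.coprime_dvd_right heven.two_dvd)
    obtain ⟨k, hk⟩ := (Nat.Odd.sub_odd hb ha).two_dvd
    rw [hk, mul_left_comm, ← mul_assoc]
    exact hD.mul_right k
  · exact (hodd.coprime_two_right.dvd_of_dvd_mul_left hD).mul_right _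

lemma two_le_of_mul_sub_eq_mul (hab : a < b) (hb : 2 * b < M) (hD : M ∣ 2 * D) (hDpos : 0 < D)
    {L : ℕ} (hL : D * (M - b - a) = M * L) : 2 ≤ L := by
  have hL0 : L ≠ 0 := by
    rintro rfl
    rw [mul_zero, Nat.mul_eq_zero] at hL
    omega
  have hL1 : L ≠ 1 := by
    rintro rfl
    have hMD : M ≤ 2 * D := Nat.le_of_dvd (by omega) hD
    have hle : M - b - a ≤ 2 := Nat.le_of_mul_le_mul_left (by omega) hDpos
    have htwo : M - b - a = 2 := by omega
    rw [htwo] at hL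
    omega
  omega

lemma exists_mul_sub_eq_mul (hab : a < b) (hb : 2 * b < M) (haM : a.Coprime M) (hbM : b.Coprime M)
    (hD : M ∣ 2 * D) (hDpos : 0 < D) :
    ∃ L, D * (M - b - a) = M * L ∧ 2 ≤ L ∧ L ≤ D := by
  have hbM' : (M - b).Coprime M := (Nat.coprime_self_sub_left (by omega)).2 hbM
  obtain ⟨L, hL⟩ := dvd_mul_sub_of_dvd_two_mul hD haM hbM'
  refine ⟨L, hL, two_le_of_mul_sub_eq_mul hab hb hD hDpos hL, ?_⟩
  refine Nat.le_of_mul_le_mul_left ?_ (by omega : 0 < M)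
  rw [← hL, mul_comm]
  exact Nat.mul_le_mul_right D (by omega)

lemma pmSeries_sub_eq (hab : a ≤ b) (hb : 2 * b ≤ M) {j L : ℕ} (hj : D * (b - a) = M * j)
    (hL : D * (M - b - a) = M * L) :
    pmSeries hM a (s + D) s + pmSeries hM a s (s + D) -
        (pmSeries hM b (s + D) s + pmSeries hM b s (s + D)) =
      X ^ (M * s + D * a) * expand M hM ((1 - X ^ j) * (1 - X ^ L) *
        multisetSeries .univ (s + D) * multisetSeries .univ s) := by
  have hb_exp : D * b = D * a + M * j := by
    rw [← hj, ← mul_add]; congr 1; omega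
  have hb_exp' : D * (M - b) = D * a + M * L := by
    rw [← hL, ← mul_add]; congr 1; omega
  have ha_exp' : D * (M - a) = D * a + M * j + M * L := by
    rw [← hj, ← hL, ← mul_add, ← mul_add]; congr 1; omega
  rw [← pmSeries_comm hM (by omega : a ≤ M) (s + D) s,
    ← pmSeries_comm hM (by omega : b ≤ M) (s + D) s, pmSeries_add_left hM (by omega),
    pmSeries_add_left hM (by omega), pmSeries_add_left hM (by omega),
    pmSeries_add_left hM (by omega), hb_exp, hb_exp', ha_exp']
  simp only [map_mul, map_sub, map_one, map_pow, expand_X]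
  ring

lemma pmSeries_sub_mem_nonnegCoeff (hab : a < b) (hb : 2 * b < M) (haM : a.Coprime M)
    (hbM : b.Coprime M) (hD : M ∣ 2 * D) :
    pmSeries hM a (s + D) s + pmSeries hM a s (s + D) -
      (pmSeries hM b (s + D) s + pmSeries hM b s (s + D)) ∈ nonnegCoeff ℤ := by
  rcases D.eq_zero_or_pos with rfl | hDpos
  · have hzero : pmSeries hM a (s + 0) s = pmSeries hM b (s + 0) s := by
      rw [pmSeries_add_left hM (by omega), pmSeries_add_left hM (by omega), zero_mul, zero_mul]
    rw [add_zero] at hzero ⊢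
    rw [hzero, sub_self]
    exact zero_mem _
  obtain ⟨j, hj⟩ := dvd_mul_sub_of_dvd_two_mul hD haM hbM
  obtain ⟨L, hL, hL2, hLD⟩ := exists_mul_sub_eq_mul hab hb haM hbM hD hDpos
  rw [pmSeries_sub_eq hM hab.le hb.le hj hL]
  exact mul_mem (X_pow_mem_nonnegCoeff _) <| expand_mem_nonnegCoeff hM <| mul_mem
    (one_sub_X_pow_mul_multisetSeries_univ_mem_nonnegCoeff j hL2 (by omega))
    (multisetSeries_mem_nonnegCoeff _ s)

lemma coeff_pmSeries_add_le (hab : a < b) (hb : 2 * b < M) (haM : a.Coprime M)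
    (hbM : b.Coprime M) (hn : M ∣ 2 * n) :
    coeff n (pmSeries hM b (s + D) s + pmSeries hM b s (s + D)) ≤
      coeff n (pmSeries hM a (s + D) s + pmSeries hM a s (s + D)) := by
  by_cases hD : M ∣ 2 * D
  · rw [← sub_nonneg, ← map_sub]
    exact mem_nonnegCoeff.1 (pmSeries_sub_mem_nonnegCoeff hM hab hb haM hbM hD) n
  · have hbM' : (M - b).Coprime M := (Nat.coprime_self_sub_left (by omega)).2 hbM
    rw [← pmSeries_comm hM (by omega : b ≤ M) (s + D) s, map_add,
      coeff_pmSeries_eq_zero hM (by omega) hbM hn hD,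
      coeff_pmSeries_eq_zero hM (by omega) hbM' hn hD, add_zero]
    exact mem_nonnegCoeff.1
      (add_mem (pmSeries_mem_nonnegCoeff hM _ _ _) (pmSeries_mem_nonnegCoeff hM _ _ _)) n

end Comparison

theorem partition_inequality_mod_M_even_general {M a b : ℕ} (hab : a < b) (hb : 2 * b < M)
    (haM : a.Coprime M) (hbM : b.Coprime M) (m : ℕ) {n : ℕ} (hn : M ∣ 2 * n) :
    #(pmPartitions M b m n) ≤ #(pmPartitions M a m n) := by
  have hM : M ≠ 0 := by omega
  have ha : 0 < a := by
    refine Nat.pos_of_ne_zero ?_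
    rintro rfl
    rw [Nat.coprime_zero_left] at haM
    omega
  have htwo : 2 * (#(pmPartitions M b m n) : ℤ) ≤ 2 * #(pmPartitions M a m n) := by
    rw [two_mul_card_pmPartitions hM (by omega) hb, two_mul_card_pmPartitions hM ha (by omega)]
    refine sum_le_sum fun q _ => ?_
    rcases le_total q.2 q.1 with h | h <;> obtain ⟨D, hD⟩ := Nat.exists_eq_add_of_le h <;> rw [hD]
    · exact coeff_pmSeries_add_le hM hab hb haM hbM hn
    · rw [add_comm (pmSeries hM b _ _), add_comm (pmSeries hM a _ _)]
      exact coeff_pmSeries_add_le hM hab hb haM hbM hn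
  omega

theorem partition_inequality_mod_M_even (M a b : ℕ) (hM : 6 ≤ M) (hMe : Even M)
    (ha : 1 ≤ a) (hab : a < b) (hb : 2 * b < M)
    (haM : Nat.Coprime a M) (hbM : Nat.Coprime b M)
    (n m : ℕ) (hm1 : 1 ≤ m) (hm2 : m ≤ M * n + M / 2) :
    (Finset.univ.filter (fun p : Nat.Partition (M * n + M / 2) =>
        Multiset.card p.parts = m ∧
        ∀ x ∈ p.parts, x % M = a ∨ x % M = M - a)).card ≥
    (Finset.univ.filter (fun p : Nat.Partition (M * n + M / 2) =>
        Multiset.card p.parts = m ∧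
        ∀ x ∈ p.parts, x % M = b ∨ x % M = M - b)).card := by
  have hdvd : M ∣ 2 * (M * n + M / 2) :=
    ⟨2 * n + 1, by rw [mul_add, Nat.mul_div_cancel' hMe.two_dvd]; ring⟩
  exact partition_inequality_mod_M_even_general hab hb haM hbM m hdvd
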